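/- Sufficiency for Morrey boundedness: If 1 < p < q < ∞ and ω ∈ A_p(ℤ), then the discrete Hardy–Littlewood maximal operator M is bounded on the discrete weighted Morrey space l^p_q(ω): ‖Mx‖_{l^p_q(ω)} ≤ C‖x‖_{l^p_q(ω)}. -/

import Mathlib

open Finset MeasureTheory
open scoped Classical

noncomputable section

/-- The symmetric interval `S_{m,N} = {k : |k - m| ≤ N}` as a finite set. -/
def Sint (m : ℤ) (N : ℕ) : Finset ℤ := Finset.Icc (m - N) (m + N)

/-- `w(S) = Σ_{k ∈ S} w(k)`. -/
def wSum (w : ℤ → ℝ) (s : Finset ℤ) : ℝ := ∑ k ∈ s, w k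

/-- Discrete weighted Morrey norm `‖x‖_{l^p_q(w,v)}`. -/
def morreyNorm (p q : ℝ) (w v : ℤ → ℝ) (x : ℤ → ℝ) : ℝ :=
  ⨆ mN : ℤ × ℕ, (wSum v (Sint mN.1 mN.2)) ^ (1/q - 1/p) *
    (∑ k ∈ Sint mN.1 mN.2, |x k| ^ p * w k) ^ (1/p)

/-- The discrete Muckenhoupt class `A₁(ℤ)`. -/
def discreteA1 (w : ℤ → ℝ) : Prop :=
  ∃ C : ℝ, ∀ a b : ℤ, (hab : a ≤ b) →
    ((Finset.Icc a b).card : ℝ)⁻¹ * (∑ k ∈ Finset.Icc a b, w k) ≤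
      C * (Finset.Icc a b).inf' (Finset.nonempty_Icc.mpr hab) w

/-- The discrete Muckenhoupt class `A_p(ℤ)` for `1 < p < ∞`. -/
def discreteAp (p : ℝ) (w : ℤ → ℝ) : Prop :=
  ∃ C : ℝ, ∀ a b : ℤ, a ≤ b →
    (((Finset.Icc a b).card : ℝ)⁻¹ * ∑ k ∈ Finset.Icc a b, w k) *
      (((Finset.Icc a b).card : ℝ)⁻¹ *
        ∑ k ∈ Finset.Icc a b, (w k) ^ (-(p-1)⁻¹)) ^ (p-1) ≤ C

/-- The discrete weighted Hardy–Littlewood maximal operator `M_w`. -/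
def maxW (w x : ℤ → ℝ) (m : ℤ) : ℝ :=
  ⨆ N : ℕ, (wSum w (Sint m N))⁻¹ * ∑ k ∈ Sint m N, |x k| * w k

/-- The discrete (unweighted) Hardy–Littlewood maximal operator `M`. -/
def maxHL (x : ℤ → ℝ) (m : ℤ) : ℝ :=
  ⨆ N : ℕ, ((2 * N + 1 : ℕ) : ℝ)⁻¹ * ∑ k ∈ Sint m N, |x k|

theorem add_rpow_le_two_rpow_mul {a b r : ℝ} (ha : 0 ≤ a) (hb : 0 ≤ b) (hr : 1 ≤ r) :
    (a + b) ^ r ≤ 2 ^ (r - 1) * (a ^ r + b ^ r) := by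
  lift a to NNReal using ha
  lift b to NNReal using hb
  exact_mod_cast NNReal.rpow_add_le_mul_rpow_add_rpow a b hr

theorem layer_integrableOn (M s : ℝ) (hM : 0 ≤ M) (hs : 0 < s) :
    IntegrableOn ((Set.Iio M).indicator fun t : ℝ => t ^ (s - 1)) (Set.Ioi 0) := by
  have h := (intervalIntegrable_iff_integrableOn_Ioo_of_le hM).1
    (intervalIntegral.intervalIntegrable_rpow' (a := 0) (b := M) (r := s - 1) (by linarith))
  rw [IntegrableOn, integrable_indicator_iff measurableSet_Iio, IntegrableOn,
    Measure.restrict_restrict measurableSet_Iio, Set.inter_comm, Set.Ioi_inter_Iio]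
  exact h

theorem layer_integral (M s : ℝ) (hM : 0 ≤ M) (hs : 0 < s) :
    ∫ t in Set.Ioi (0 : ℝ), (Set.Iio M).indicator (fun t : ℝ => t ^ (s - 1)) t = M ^ s / s := by
  rw [setIntegral_indicator measurableSet_Iio, Set.Ioi_inter_Iio,
    ← integral_Ioc_eq_integral_Ioo, ← intervalIntegral.integral_of_le hM,
    integral_rpow (Or.inl (by linarith))]
  simp [Real.zero_rpow hs.ne']

/-- A restricted weak-type estimate self-improves to a strong-type estimate. -/
theorem strong_type_of_weak_type {ι : Type*} (T : Finset ι) (w f g : ι → ℝ) (r : ℝ) (hr : 1 < r)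
    (hw : ∀ k, 0 ≤ w k) (hf : ∀ k, 0 ≤ f k) (hg : ∀ k, 0 ≤ g k)
    (hweak : ∀ t : ℝ, 0 < t → t * ∑ k ∈ T with t < g k, w k ≤ ∑ k ∈ T with t < g k, f k * w k) :
    ∑ k ∈ T, g k ^ r * w k ≤ (r / (r - 1)) ^ r * ∑ k ∈ T, f k ^ r * w k := by
  have hr1 : 0 < r - 1 := by linarith
  have hr0 : 0 < r := by linarith
  have hlayer : ∑ k ∈ T, g k ^ r / r * w k ≤ ∑ k ∈ T, g k ^ (r - 1) / (r - 1) * (f k * w k) := by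
    have e1 : ∑ k ∈ T, g k ^ r / r * w k = ∫ t in Set.Ioi (0 : ℝ),
        ∑ k ∈ T, (Set.Iio (g k)).indicator (fun t : ℝ => t ^ (r - 1)) t * w k := by
      rw [integral_finsetSum _ fun k _ => (layer_integrableOn _ _ (hg k) hr0).mul_const _]
      refine Finset.sum_congr rfl fun k _ => ?_
      rw [integral_mul_const, layer_integral _ _ (hg k) hr0]
    have e2 : ∑ k ∈ T, g k ^ (r - 1) / (r - 1) * (f k * w k) = ∫ t in Set.Ioi (0 : ℝ),
        ∑ k ∈ T, (Set.Iio (g k)).indicator (fun t : ℝ => t ^ (r - 1 - 1)) t * (f k * w k) := by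
      rw [integral_finsetSum _ fun k _ => (layer_integrableOn _ _ (hg k) hr1).mul_const _]
      refine Finset.sum_congr rfl fun k _ => ?_
      rw [integral_mul_const, layer_integral _ _ (hg k) hr1]
    rw [e1, e2]
    refine setIntegral_mono_on
      (integrable_finsetSum _ fun k _ => (layer_integrableOn _ _ (hg k) hr0).mul_const _)
      (integrable_finsetSum _ fun k _ => (layer_integrableOn _ _ (hg k) hr1).mul_const _)
      measurableSet_Ioi fun t ht => ?_
    have ht : 0 < t := ht
    have h := mul_le_mul_of_nonneg_left (hweak t ht) (Real.rpow_nonneg ht.le (r - 1 - 1))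
    have htr : t ^ (r - 1) = t ^ (r - 1 - 1) * t := by
      rw [← Real.rpow_add_one ht.ne']; congr 1; ring
    rw [← mul_assoc, ← htr, Finset.mul_sum, Finset.mul_sum, Finset.sum_filter,
      Finset.sum_filter] at h
    simpa [Set.indicator_apply, ite_mul] using h
  set K := r / (r - 1) with hK
  have hK0 : 0 < K := by positivity
  have hconj : r.HolderConjugate K := (Real.holderConjugate_iff_eq_conjExponent hr).2 hK
  have hyoung : ∀ k, r * (g k ^ (r - 1) / (r - 1) * (f k * w k)) ≤
      (K ^ r / r) * (f k ^ r * w k) + (r - 1) * (g k ^ r / r * w k) := by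
    intro k
    have h := Real.young_inequality_of_nonneg (mul_nonneg hK0.le (hf k))
      (Real.rpow_nonneg (hg k) (r - 1)) hconj
    rw [Real.mul_rpow hK0.le (hf k), ← Real.rpow_mul (hg k),
      show (r - 1) * K = r by rw [hK]; field_simp] at h
    have h2 := mul_le_mul_of_nonneg_right h (hw k)
    have e : g k ^ r / K = (r - 1) * (g k ^ r / r) := by rw [hK]; field_simp
    rw [e] at h2
    calc _ = K * f k * g k ^ (r - 1) * w k := by rw [hK]; field_simp
      _ ≤ _ := h2
      _ = _ := by ring
  have hsum := Finset.sum_le_sum fun k (_ : k ∈ T) => hyoung k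
  rw [← Finset.mul_sum, Finset.sum_add_distrib, ← Finset.mul_sum, ← Finset.mul_sum] at hsum
  have h3 := mul_le_mul_of_nonneg_left hlayer hr0.le
  have e3 : ∑ k ∈ T, g k ^ r * w k = r * ∑ k ∈ T, g k ^ r / r * w k := by
    rw [Finset.mul_sum]
    refine Finset.sum_congr rfl fun k _ => ?_
    field_simp
  have h4 : ∑ k ∈ T, g k ^ r / r * w k ≤ K ^ r / r * ∑ k ∈ T, f k ^ r * w k := by linarith
  rw [e3]
  calc _ ≤ r * (K ^ r / r * ∑ k ∈ T, f k ^ r * w k) := mul_le_mul_of_nonneg_left h4 hr0.le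
    _ = _ := by field_simp

theorem sum_Icc_eq_add_sum_Icc_succ (h : ℤ → ℝ) {a b : ℤ} (hab : a ≤ b) :
    ∑ j ∈ Icc a b, h j = h a + ∑ j ∈ Icc (a + 1) b, h j := by
  have : Icc a b = insert a (Icc (a + 1) b) := by
    ext j; simp only [Finset.mem_insert, Finset.mem_Icc]; omega
  rw [this, Finset.sum_insert (by simp)]

/-- A discrete rising sun lemma. -/
theorem rising_sun (h : ℤ → ℝ) (B : ℤ) (n : ℕ) (A : ℤ) (hA : A = B + 1 - n) :
    0 ≤ ∑ k ∈ Icc A B with ∃ b ∈ Icc k B, 0 < ∑ j ∈ Icc k b, h j, h k ∧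
    ∀ b ∈ Icc A B, ∑ j ∈ Icc A b, h j ≤
      ∑ k ∈ Icc A B with ∃ b ∈ Icc k B, 0 < ∑ j ∈ Icc k b, h j, h k := by
  induction n generalizing A with
  | zero =>
    have : Icc A B = ∅ := by rw [Finset.Icc_eq_empty]; simp only [Nat.cast_zero] at hA; omega
    simp [this]
  | succ n ih =>
    obtain ⟨ih0, ih1⟩ := ih (A + 1) (by push_cast at hA; omega)
    have hAB : A ≤ B := by push_cast at hA; omega
    have hI : Icc A B = insert A (Icc (A + 1) B) := by
      ext j; simp only [Finset.mem_insert, Finset.mem_Icc]; omega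
    have hS : ∀ b ∈ Icc A B, ∑ j ∈ Icc A b, h j ≤ h A +
        ∑ k ∈ Icc (A + 1) B with ∃ b ∈ Icc k B, 0 < ∑ j ∈ Icc k b, h j, h k := by
      intro b hb
      rw [Finset.mem_Icc] at hb
      rw [sum_Icc_eq_add_sum_Icc_succ h hb.1]
      rcases hb.1.eq_or_lt with rfl | hlt
      · simpa using ih0
      · have := ih1 b (by rw [Finset.mem_Icc]; omega)
        linarith
    by_cases hE : ∃ b ∈ Icc A B, 0 < ∑ j ∈ Icc A b, h j
    · have e : ∑ k ∈ Icc A B with ∃ b ∈ Icc k B, 0 < ∑ j ∈ Icc k b, h j, h k = h A +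
          ∑ k ∈ Icc (A + 1) B with ∃ b ∈ Icc k B, 0 < ∑ j ∈ Icc k b, h j, h k := by
        rw [Finset.sum_filter, Finset.sum_filter, sum_Icc_eq_add_sum_Icc_succ _ hAB, if_pos hE]
      rw [e]
      refine ⟨?_, hS⟩
      obtain ⟨b, hb, hpos⟩ := hE
      exact hpos.le.trans (hS b hb)
    · have e : ∑ k ∈ Icc A B with ∃ b ∈ Icc k B, 0 < ∑ j ∈ Icc k b, h j, h k =
          ∑ k ∈ Icc (A + 1) B with ∃ b ∈ Icc k B, 0 < ∑ j ∈ Icc k b, h j, h k := by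
        rw [Finset.sum_filter, Finset.sum_filter, sum_Icc_eq_add_sum_Icc_succ _ hAB, if_neg hE,
          zero_add]
      rw [e]
      push Not at hE
      exact ⟨ih0, fun b hb => (hE b hb).trans ih0⟩

/-- The right-sided weighted maximal function on a bounded interval is of strong type. -/
theorem exists_right_majorant (w f : ℤ → ℝ) (hw : ∀ k, 0 < w k) (hf : ∀ k, 0 ≤ f k)
    (r : ℝ) (hr : 1 < r) (A B : ℤ) :
    ∃ g : ℤ → ℝ, (∀ k, 0 ≤ g k) ∧
      (∀ k b, k ≤ b → b ≤ B → ∑ j ∈ Icc k b, f j * w j ≤ g k * ∑ j ∈ Icc k b, w j) ∧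
      ∑ k ∈ Icc A B, g k ^ r * w k ≤ (r / (r - 1)) ^ r * ∑ k ∈ Icc A B, f k ^ r * w k := by
  set u : ℤ → ℤ → ℝ := fun k b => (∑ j ∈ Icc k b, f j * w j) / ∑ j ∈ Icc k b, w j with hu
  have hu0 : ∀ k b, 0 ≤ u k b := fun k b =>
    div_nonneg (Finset.sum_nonneg fun j _ => mul_nonneg (hf j) (hw j).le)
      (Finset.sum_nonneg fun j _ => (hw j).le)
  have hpos : ∀ k b : ℤ, k ≤ b → 0 < ∑ j ∈ Icc k b, w j := fun k b hkb =>
    Finset.sum_pos (fun j _ => hw j) (Finset.nonempty_Icc.2 hkb)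
  set g : ℤ → ℝ := fun k =>
    if h : k ≤ B then (Icc k B).sup' (Finset.nonempty_Icc.2 h) (u k) else 0 with hgdef
  have hg0 : ∀ k, 0 ≤ g k := by
    intro k
    simp only [hgdef]
    split_ifs with h
    · exact (hu0 k k).trans (Finset.le_sup' (u k) (by simpa using h))
    · rfl
  refine ⟨g, hg0, ?_, ?_⟩
  · intro k b hkb hb
    rw [← div_le_iff₀ (hpos k b hkb)]
    simp only [hgdef, dif_pos (hkb.trans hb)]
    exact Finset.le_sup' (u k) (by rw [Finset.mem_Icc]; omega)
  · refine strong_type_of_weak_type _ w f g r hr (fun k => (hw k).le) hf hg0 fun t _ => ?_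
    have hset : (Icc A B).filter (fun k => t < g k) =
        (Icc A B).filter (fun k => ∃ b ∈ Icc k B, 0 < ∑ j ∈ Icc k b, (f j - t) * w j) := by
      refine Finset.filter_congr fun k hk => ?_
      rw [Finset.mem_Icc] at hk
      simp only [hgdef, dif_pos hk.2, Finset.lt_sup'_iff]
      refine exists_congr fun b => and_congr_right fun hb => ?_
      rw [Finset.mem_Icc] at hb
      simp only [hu, lt_div_iff₀ (hpos k b hb.1), sub_mul, Finset.sum_sub_distrib, sub_pos,
        Finset.mul_sum]
    have key : 0 ≤ ∑ k ∈ Icc A B with t < g k, (f k - t) * w k := by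
      rw [hset]
      rcases le_or_gt A (B + 1) with hAB | hAB
      · exact (rising_sun (fun j => (f j - t) * w j) B (B + 1 - A).toNat A (by omega)).1
      · rw [Finset.Icc_eq_empty (by omega)]; simp
    simp only [sub_mul, Finset.sum_sub_distrib, ← Finset.mul_sum] at key
    linarith

theorem sum_Icc_neg (h : ℤ → ℝ) (a b : ℤ) :
    ∑ j ∈ Icc (-b) (-a), h (-j) = ∑ j ∈ Icc a b, h j := by
  refine Finset.sum_nbij' (fun j => -j) (fun j => -j) ?_ ?_ ?_ ?_ ?_ <;>
    simp only [Finset.mem_Icc] <;> intros <;> first | omega | simp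

/-- The uncentred weighted maximal function on a bounded interval is of strong type. -/
theorem exists_uncentred_majorant (r : ℝ) (hr : 1 < r) :
    ∃ K > 0, ∀ w f : ℤ → ℝ, (∀ k, 0 < w k) → (∀ k, 0 ≤ f k) → ∀ A B : ℤ,
    ∃ g : ℤ → ℝ, (∀ k, 0 ≤ g k) ∧
      (∀ a k b, A ≤ a → a ≤ k → k ≤ b → b ≤ B →
        ∑ j ∈ Icc a b, f j * w j ≤ g k * ∑ j ∈ Icc a b, w j) ∧
      ∑ k ∈ Icc A B, g k ^ r * w k ≤ K * ∑ k ∈ Icc A B, f k ^ r * w k := by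
  have hr1 : 0 < r - 1 := by linarith
  have hr0 : 0 < r := by linarith
  refine ⟨2 ^ (r - 1) * (2 * (r / (r - 1)) ^ r), by positivity, fun w f hw hf A B => ?_⟩
  obtain ⟨g₁, h₁, hb₁, hs₁⟩ := exists_right_majorant w f hw hf r hr A B
  obtain ⟨g₂, h₂, hb₂, hs₂⟩ := exists_right_majorant (fun k => w (-k)) (fun k => f (-k))
    (fun k => hw _) (fun k => hf _) r hr (-B) (-A)
  refine ⟨fun k => g₁ k + g₂ (-k), fun k => add_nonneg (h₁ _) (h₂ _), ?_, ?_⟩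
  · intro a k b hA hak hkb hB
    have i₁ := hb₁ k b hkb hB
    have i₂ := hb₂ (-k) (-a) (by omega) (by omega)
    rw [sum_Icc_neg (fun j => f j * w j), sum_Icc_neg w] at i₂
    have hU : Icc a b = Icc a k ∪ Icc k b := by
      ext j; simp only [Finset.mem_union, Finset.mem_Icc]; omega
    have i₃ : ∑ j ∈ Icc a b, f j * w j ≤
        ∑ j ∈ Icc a k, f j * w j + ∑ j ∈ Icc k b, f j * w j := by
      rw [hU, ← Finset.sum_union_inter]
      exact le_add_of_nonneg_right (Finset.sum_nonneg fun j _ => mul_nonneg (hf j) (hw j).le)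
    have i₄ : ∑ j ∈ Icc k b, w j ≤ ∑ j ∈ Icc a b, w j :=
      Finset.sum_le_sum_of_subset_of_nonneg (Finset.Icc_subset_Icc hak le_rfl)
        fun j _ _ => (hw j).le
    have i₅ : ∑ j ∈ Icc a k, w j ≤ ∑ j ∈ Icc a b, w j :=
      Finset.sum_le_sum_of_subset_of_nonneg (Finset.Icc_subset_Icc le_rfl hkb)
        fun j _ _ => (hw j).le
    have i₆ := mul_le_mul_of_nonneg_left i₄ (h₁ k)
    have i₇ := mul_le_mul_of_nonneg_left i₅ (h₂ (-k))
    rw [add_mul]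
    linarith
  · have e₁ := sum_Icc_neg (fun k => g₂ (-k) ^ r * w k) A B
    have e₂ := sum_Icc_neg (fun k => f k ^ r * w k) A B
    simp only [neg_neg] at e₁
    rw [e₁, e₂] at hs₂
    calc ∑ k ∈ Icc A B, (g₁ k + g₂ (-k)) ^ r * w k
        ≤ ∑ k ∈ Icc A B, 2 ^ (r - 1) * (g₁ k ^ r * w k + g₂ (-k) ^ r * w k) := by
          refine Finset.sum_le_sum fun k _ => ?_
          have h := mul_le_mul_of_nonneg_right
            (add_rpow_le_two_rpow_mul (h₁ k) (h₂ (-k)) hr.le) (hw k).le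
          linarith
      _ = 2 ^ (r - 1) * (∑ k ∈ Icc A B, g₁ k ^ r * w k +
            ∑ k ∈ Icc A B, g₂ (-k) ^ r * w k) := by
          rw [← Finset.mul_sum, Finset.sum_add_distrib]
      _ ≤ 2 ^ (r - 1) * ((r / (r - 1)) ^ r * ∑ k ∈ Icc A B, f k ^ r * w k +
            (r / (r - 1)) ^ r * ∑ k ∈ Icc A B, f k ^ r * w k) := by gcongr
      _ = _ := by ring

section Muckenhoupt

variable {p : ℝ} {w : ℤ → ℝ}

theorem dual_weight_pos (hw : ∀ k, 0 < w k) (k : ℤ) : 0 < w k ^ (-(p - 1)⁻¹) :=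
  Real.rpow_pos_of_pos (hw k) _

theorem div_dual_weight_rpow_mul (hp : 1 < p) {y v : ℝ} (hy : 0 ≤ y) (hv : 0 < v) :
    (y / v ^ (-(p - 1)⁻¹)) ^ p * v ^ (-(p - 1)⁻¹) = y ^ p * v := by
  have hp1 : p - 1 ≠ 0 := by linarith
  have hσ : 0 < v ^ (-(p - 1)⁻¹) := Real.rpow_pos_of_pos hv _
  have h1 : (v ^ (-(p - 1)⁻¹)) ^ p = v⁻¹ * v ^ (-(p - 1)⁻¹) := by
    rw [← Real.rpow_mul hv.le, ← Real.rpow_neg_one v, ← Real.rpow_add hv]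
    congr 1
    field_simp
    ring
  rw [Real.div_rpow hy hσ.le, h1]
  field_simp

theorem rpow_div_weight_rpow_mul (hp : 1 < p) {g v : ℝ} (hg : 0 ≤ g) (hv : 0 < v) :
    (g ^ (p - 1) / v) ^ (p / (p - 1)) * v = g ^ p * v ^ (-(p - 1)⁻¹) := by
  have hp1 : p - 1 ≠ 0 := by linarith
  have h1 : (g ^ (p - 1)) ^ (p / (p - 1)) = g ^ p := by
    rw [← Real.rpow_mul hg]
    congr 1
    field_simp
  have h2 : v ^ (p / (p - 1)) = v * v ^ (p - 1)⁻¹ := by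
    nth_rewrite 2 [← Real.rpow_one v]
    rw [← Real.rpow_add hv]
    congr 1
    field_simp
    ring
  have hσ : 0 < v ^ (p - 1)⁻¹ := Real.rpow_pos_of_pos hv _
  rw [Real.div_rpow (Real.rpow_nonneg hg _) hv.le, h1, h2, Real.rpow_neg hv.le]
  field_simp

/-- Under the `A_p` condition, averages over an interval are controlled by weighted `l^p` norms. -/
theorem average_rpow_mul_sum_le (hp : 1 < p) (hw : ∀ k, 0 < w k) {C : ℝ} {a b : ℤ} (hab : a ≤ b)
    (hC : (((Icc a b).card : ℝ)⁻¹ * ∑ k ∈ Icc a b, w k) *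
      (((Icc a b).card : ℝ)⁻¹ * ∑ k ∈ Icc a b, (w k) ^ (-(p-1)⁻¹)) ^ (p-1) ≤ C)
    {y : ℤ → ℝ} (hy : ∀ k, 0 ≤ y k) :
    (((Icc a b).card : ℝ)⁻¹ * ∑ k ∈ Icc a b, y k) ^ p * ∑ k ∈ Icc a b, w k ≤
      C * ∑ k ∈ Icc a b, y k ^ p * w k := by
  have hp0 : 0 < p := by linarith
  have hσ := dual_weight_pos (p := p) hw
  set n : ℝ := (((Icc a b).card : ℝ))⁻¹ with hn
  have hn0 : 0 < n := inv_pos.2 (by exact_mod_cast (Finset.nonempty_Icc.2 hab).card_pos)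
  have hHolder := Real.inner_le_weight_mul_Lp_of_nonneg (Icc a b) hp.le
    (fun k => w k ^ (-(p - 1)⁻¹)) (fun k => y k / w k ^ (-(p - 1)⁻¹)) (fun k => (hσ k).le)
    fun k => div_nonneg (hy k) (hσ k).le
  have e₁ : ∑ k ∈ Icc a b, w k ^ (-(p - 1)⁻¹) * (y k / w k ^ (-(p - 1)⁻¹)) =
      ∑ k ∈ Icc a b, y k :=
    Finset.sum_congr rfl fun k _ => mul_div_cancel₀ _ (hσ k).ne'
  have e₂ : ∑ k ∈ Icc a b, w k ^ (-(p - 1)⁻¹) * (y k / w k ^ (-(p - 1)⁻¹)) ^ p =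
      ∑ k ∈ Icc a b, y k ^ p * w k :=
    Finset.sum_congr rfl fun k _ => by
      rw [mul_comm, div_dual_weight_rpow_mul hp (hy k) (hw k)]
  rw [e₁, e₂] at hHolder
  set Z := ∑ k ∈ Icc a b, w k ^ (-(p - 1)⁻¹)
  set F := ∑ k ∈ Icc a b, y k ^ p * w k
  set W := ∑ k ∈ Icc a b, w k
  have hY0 : 0 ≤ ∑ k ∈ Icc a b, y k := Finset.sum_nonneg fun k _ => hy k
  set Y := ∑ k ∈ Icc a b, y k
  have hZ0 : 0 ≤ Z := Finset.sum_nonneg fun k _ => (hσ k).le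
  have hW0 : 0 ≤ W := Finset.sum_nonneg fun k _ => (hw k).le
  have hF0 : 0 ≤ F :=
    Finset.sum_nonneg fun k _ => mul_nonneg (Real.rpow_nonneg (hy k) _) (hw k).le
  have h := Real.rpow_le_rpow hY0 hHolder hp0.le
  rw [Real.mul_rpow (Real.rpow_nonneg hZ0 _) (Real.rpow_nonneg hF0 _), ← Real.rpow_mul hZ0,
    ← Real.rpow_mul hF0, inv_mul_cancel₀ hp0.ne', Real.rpow_one,
    show (1 - p⁻¹) * p = p - 1 by field_simp] at h
  have hnp : n ^ p = n * n ^ (p - 1) := by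
    nth_rewrite 2 [← Real.rpow_one n]
    rw [← Real.rpow_add hn0]
    congr 1
    ring
  rw [Real.mul_rpow hn0.le hZ0] at hC
  rw [Real.mul_rpow hn0.le hY0, hnp]
  calc n * n ^ (p - 1) * Y ^ p * W ≤ n * n ^ (p - 1) * (Z ^ (p - 1) * F) * W := by gcongr
    _ = (n * W * (n ^ (p - 1) * Z ^ (p - 1))) * F := by ring
    _ ≤ C * F := mul_le_mul_of_nonneg_right hC hF0

/-- Muckenhoupt's theorem for the maximal function on a bounded interval, by Lerner's argument. -/
theorem exists_average_majorant (hp : 1 < p) (hw : ∀ k, 0 < w k) {C : ℝ} (hC0 : 0 < C)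
    (hC : ∀ a b : ℤ, a ≤ b →
      (((Icc a b).card : ℝ)⁻¹ * ∑ k ∈ Icc a b, w k) *
        (((Icc a b).card : ℝ)⁻¹ * ∑ k ∈ Icc a b, (w k) ^ (-(p-1)⁻¹)) ^ (p-1) ≤ C) :
    ∃ K > 0, ∀ y : ℤ → ℝ, (∀ k, 0 ≤ y k) → ∀ A B : ℤ,
    ∃ G : ℤ → ℝ, (∀ k, 0 ≤ G k) ∧
      (∀ a k b, A ≤ a → a ≤ k → k ≤ b → b ≤ B →
        ((Icc a b).card : ℝ)⁻¹ * ∑ j ∈ Icc a b, y j ≤ G k) ∧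
      ∑ k ∈ Icc A B, G k ^ p * w k ≤ K * ∑ k ∈ Icc A B, y k ^ p * w k := by
  have hp0 : 0 < p := by linarith
  have hp1 : 0 < p - 1 := by linarith
  have hσ := dual_weight_pos (p := p) hw
  obtain ⟨K₁, hK₁, H₁⟩ := exists_uncentred_majorant p hp
  obtain ⟨K₂, hK₂, H₂⟩ := exists_uncentred_majorant (p / (p - 1))
    ((one_lt_div hp1).2 (by linarith))
  refine ⟨C ^ (p / (p - 1)) * (K₂ * K₁), by positivity, fun y hy A B => ?_⟩
  obtain ⟨g₁, hg₁, hb₁, hs₁⟩ := H₁ (fun k => w k ^ (-(p - 1)⁻¹))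
    (fun k => y k / w k ^ (-(p - 1)⁻¹)) hσ (fun k => div_nonneg (hy k) (hσ k).le) A B
  obtain ⟨g₂, hg₂, hb₂, hs₂⟩ := H₂ w (fun k => g₁ k ^ (p - 1) / w k) hw
    (fun k => div_nonneg (Real.rpow_nonneg (hg₁ k) _) (hw k).le) A B
  simp only [div_dual_weight_rpow_mul hp (hy _) (hw _)] at hs₁
  simp only [rpow_div_weight_rpow_mul hp (hg₁ _) (hw _)] at hs₂
  simp only [div_mul_cancel₀ _ (hσ _).ne'] at hb₁
  simp only [div_mul_cancel₀ _ (hw _).ne'] at hb₂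
  refine ⟨fun k => (C * g₂ k) ^ (p - 1)⁻¹,
    fun k => Real.rpow_nonneg (mul_nonneg hC0.le (hg₂ k)) _, ?_, ?_⟩
  · intro a k b hA hak hkb hB
    have hab := hak.trans hkb
    have hcard : (0 : ℝ) < (Icc a b).card := by
      exact_mod_cast (Finset.nonempty_Icc.2 hab).card_pos
    have hCab := hC a b hab
    have hn0 : 0 < ((Icc a b).card : ℝ)⁻¹ := inv_pos.2 hcard
    set n : ℝ := ((Icc a b).card : ℝ)⁻¹ with hn
    have hY0 : 0 ≤ n * ∑ j ∈ Icc a b, y j :=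
      mul_nonneg hn0.le (Finset.sum_nonneg fun k _ => hy k)
    have hZ0 : 0 ≤ n * ∑ j ∈ Icc a b, w j ^ (-(p - 1)⁻¹) :=
      mul_nonneg hn0.le (Finset.sum_nonneg fun k _ => (hσ k).le)
    rw [Real.le_rpow_inv_iff_of_pos hY0 (mul_nonneg hC0.le (hg₂ k)) hp1]
    set a₀ := n * ∑ j ∈ Icc a b, y j with ha₀
    set s := n * ∑ j ∈ Icc a b, w j ^ (-(p - 1)⁻¹) with hs
    have hpt : ∀ j ∈ Icc a b, a₀ ^ (p - 1) ≤ s ^ (p - 1) * g₁ j ^ (p - 1) := by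
      intro j hj
      rw [Finset.mem_Icc] at hj
      rw [← Real.mul_rpow hZ0 (hg₁ j)]
      refine Real.rpow_le_rpow hY0 ?_ hp1.le
      have := mul_le_mul_of_nonneg_left (hb₁ a j b hA hj.1 hj.2 hB) hn0.le
      rw [ha₀, hs]
      linarith
    have hsum := Finset.card_nsmul_le_sum _ _ _ hpt
    rw [nsmul_eq_mul, ← Finset.mul_sum] at hsum
    calc a₀ ^ (p - 1) = n * ((Icc a b).card * a₀ ^ (p - 1)) := by
          rw [hn, inv_mul_cancel_left₀ hcard.ne']
      _ ≤ n * (s ^ (p - 1) * ∑ j ∈ Icc a b, g₁ j ^ (p - 1)) := by gcongr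
      _ ≤ n * (s ^ (p - 1) * (g₂ k * ∑ j ∈ Icc a b, w j)) := by
          gcongr
          exact hb₂ a k b hA hak hkb hB
      _ = (n * ∑ j ∈ Icc a b, w j) * s ^ (p - 1) * g₂ k := by ring
      _ ≤ C * g₂ k := mul_le_mul_of_nonneg_right hCab (hg₂ k)
  · calc ∑ k ∈ Icc A B, ((C * g₂ k) ^ (p - 1)⁻¹) ^ p * w k
        = C ^ (p / (p - 1)) * ∑ k ∈ Icc A B, g₂ k ^ (p / (p - 1)) * w k := by
          rw [Finset.mul_sum]
          refine Finset.sum_congr rfl fun k _ => ?_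
          rw [← Real.rpow_mul (mul_nonneg hC0.le (hg₂ k)), inv_mul_eq_div,
            Real.mul_rpow hC0.le (hg₂ k), mul_assoc]
      _ ≤ C ^ (p / (p - 1)) * (K₂ * (K₁ * ∑ k ∈ Icc A B, y k ^ p * w k)) := by
          gcongr
          exact hs₂.trans (mul_le_mul_of_nonneg_left hs₁ hK₂.le)
      _ = _ := by ring

end Muckenhoupt

theorem card_Sint (m : ℤ) (N : ℕ) : (Sint m N).card = 2 * N + 1 := by
  rw [Sint, Int.card_Icc]; omega

theorem maxHL_nonneg (x : ℤ → ℝ) (m : ℤ) : 0 ≤ maxHL x m :=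
  Real.iSup_nonneg fun _ =>
    mul_nonneg (inv_nonneg.2 (Nat.cast_nonneg _)) (Finset.sum_nonneg fun _ _ => abs_nonneg _)

theorem wSum_Sint_pos {w : ℤ → ℝ} (hw : ∀ k, 0 < w k) (m : ℤ) (N : ℕ) : 0 < wSum w (Sint m N) :=
  Finset.sum_pos (fun k _ => hw k) (Finset.card_pos.1 (by rw [card_Sint]; omega))

theorem wSum_mono {w : ℤ → ℝ} (hw : ∀ k, 0 < w k) {s t : Finset ℤ} (h : s ⊆ t) :
    wSum w s ≤ wSum w t :=
  Finset.sum_le_sum_of_subset_of_nonneg h fun k _ _ => (hw k).le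

theorem morreyNorm_nonneg (p q : ℝ) {w : ℤ → ℝ} (hw : ∀ k, 0 < w k) (x : ℤ → ℝ) :
    0 ≤ morreyNorm p q w w x :=
  Real.iSup_nonneg fun _ => mul_nonneg (Real.rpow_nonneg (wSum_Sint_pos hw _ _).le _)
    (Real.rpow_nonneg (Finset.sum_nonneg fun k _ =>
      mul_nonneg (Real.rpow_nonneg (abs_nonneg _) _) (hw k).le) _)

theorem sum_rpow_mul_le_morreyNorm {p q : ℝ} (hp : 1 < p) (hpq : p < q) {w : ℤ → ℝ}
    (hw : ∀ k, 0 < w k) {x : ℤ → ℝ}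
    (hx : BddAbove (Set.range fun mN : ℤ × ℕ =>
        (wSum w (Sint mN.1 mN.2)) ^ (1/q - 1/p) *
          (∑ k ∈ Sint mN.1 mN.2, |x k| ^ p * w k) ^ (1/p))) (m : ℤ) (N : ℕ) :
    ∑ k ∈ Sint m N, |x k| ^ p * w k ≤
      morreyNorm p q w w x ^ p * wSum w (Sint m N) ^ (1 - p / q) := by
  have hp0 : 0 < p := by linarith
  have hq0 : 0 < q := by linarith
  have hW := wSum_Sint_pos hw m N
  have hF : 0 ≤ ∑ k ∈ Sint m N, |x k| ^ p * w k := Finset.sum_nonneg fun k _ =>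
      mul_nonneg (Real.rpow_nonneg (abs_nonneg _) _) (hw k).le
  have h : wSum w (Sint m N) ^ (1/q - 1/p) * (∑ k ∈ Sint m N, |x k| ^ p * w k) ^ (1/p) ≤
      morreyNorm p q w w x := le_ciSup hx (m, N)
  have h2 := Real.rpow_le_rpow (mul_nonneg (Real.rpow_nonneg hW.le _) (Real.rpow_nonneg hF _))
    h hp0.le
  rw [Real.mul_rpow (Real.rpow_nonneg hW.le _) (Real.rpow_nonneg hF _), ← Real.rpow_mul hW.le,
    ← Real.rpow_mul hF, one_div_mul_cancel hp0.ne', Real.rpow_one] at h2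
  have h3 := mul_le_mul_of_nonneg_right h2 (Real.rpow_nonneg hW.le (1 - p / q))
  have e : wSum w (Sint m N) ^ ((1/q - 1/p) * p) * wSum w (Sint m N) ^ (1 - p / q) = 1 := by
    rw [← Real.rpow_add hW, show (1/q - 1/p) * p + (1 - p / q) = 0 by field_simp; ring,
      Real.rpow_zero]
  calc _ = (wSum w (Sint m N) ^ ((1/q - 1/p) * p) * wSum w (Sint m N) ^ (1 - p / q)) *
        ∑ k ∈ Sint m N, |x k| ^ p * w k := by rw [e, one_mul]
    _ ≤ _ := by linarith

section Averages

variable {p : ℝ} {w : ℤ → ℝ} {C : ℝ}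

theorem average_Sint_le (hp : 1 < p) {q : ℝ} (hpq : p < q) (hw : ∀ k, 0 < w k) (hC0 : 0 < C)
    (hC : ∀ a b : ℤ, a ≤ b →
      (((Icc a b).card : ℝ)⁻¹ * ∑ k ∈ Icc a b, w k) *
        (((Icc a b).card : ℝ)⁻¹ * ∑ k ∈ Icc a b, (w k) ^ (-(p-1)⁻¹)) ^ (p-1) ≤ C)
    {x : ℤ → ℝ}
    (hx : BddAbove (Set.range fun mN : ℤ × ℕ =>
        (wSum w (Sint mN.1 mN.2)) ^ (1/q - 1/p) *
          (∑ k ∈ Sint mN.1 mN.2, |x k| ^ p * w k) ^ (1/p))) (m : ℤ) (N : ℕ) :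
    ((2 * N + 1 : ℕ) : ℝ)⁻¹ * ∑ k ∈ Sint m N, |x k| ≤
      C ^ (1 / p) * morreyNorm p q w w x * wSum w (Sint m N) ^ (-(1 / q)) := by
  have hp0 : 0 < p := by linarith
  have hq0 : 0 < q := by linarith
  have hW := wSum_Sint_pos hw m N
  have hN0 := morreyNorm_nonneg p q hw x
  have hmn : m - N ≤ m + N := by omega
  have h := average_rpow_mul_sum_le hp hw hmn (hC _ _ hmn) fun k => abs_nonneg (x k)
  change (((Sint m N).card : ℝ)⁻¹ * ∑ k ∈ Sint m N, |x k|) ^ p * wSum w (Sint m N) ≤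
    C * ∑ k ∈ Sint m N, |x k| ^ p * w k at h
  rw [card_Sint] at h
  have h2 := h.trans (mul_le_mul_of_nonneg_left (sum_rpow_mul_le_morreyNorm hp hpq hw hx m N)
    hC0.le)
  rw [sub_eq_add_neg, Real.rpow_add hW, Real.rpow_one] at h2
  have h3 : (((2 * N + 1 : ℕ) : ℝ)⁻¹ * ∑ k ∈ Sint m N, |x k|) ^ p ≤
      C * (morreyNorm p q w w x ^ p * wSum w (Sint m N) ^ (-(p / q))) :=
    le_of_mul_le_mul_right (by linarith) hW
  refine (Real.rpow_le_rpow_iff (mul_nonneg (inv_nonneg.2 (Nat.cast_nonneg _))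
    (Finset.sum_nonneg fun _ _ => abs_nonneg _)) (by positivity) hp0).1 (h3.trans_eq ?_)
  rw [Real.mul_rpow (by positivity) (by positivity), Real.mul_rpow (by positivity) hN0,
    ← Real.rpow_mul hC0.le, ← Real.rpow_mul hW.le, one_div_mul_cancel hp0.ne', Real.rpow_one,
    mul_assoc, show -(1 / q) * p = -(p / q) by ring]

/-- `A_p` weights are doubling. -/
theorem wSum_Sint_triple_le (hp : 1 < p) (hw : ∀ k, 0 < w k)
    (hC : ∀ a b : ℤ, a ≤ b →
      (((Icc a b).card : ℝ)⁻¹ * ∑ k ∈ Icc a b, w k) *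
        (((Icc a b).card : ℝ)⁻¹ * ∑ k ∈ Icc a b, (w k) ^ (-(p-1)⁻¹)) ^ (p-1) ≤ C)
    (m : ℤ) (N : ℕ) :
    wSum w (Sint m (3 * N)) ≤ 3 ^ p * C * wSum w (Sint m N) := by
  have hp0 : 0 < p := by linarith
  have hW := wSum_Sint_pos hw m (3 * N)
  have hmn : m - (3 * N : ℕ) ≤ m + (3 * N : ℕ) := by omega
  have h := average_rpow_mul_sum_le hp hw hmn (hC _ _ hmn)
    (y := fun k => if k ∈ Sint m N then 1 else 0) fun k => by positivity
  change (((Sint m (3 * N)).card : ℝ)⁻¹ * ∑ k ∈ Sint m (3 * N), if k ∈ Sint m N then 1 else 0) ^ p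
    * wSum w (Sint m (3 * N)) ≤
    C * ∑ k ∈ Sint m (3 * N), (if k ∈ Sint m N then 1 else 0) ^ p * w k at h
  have hsub : Sint m N ⊆ Sint m (3 * N) := Finset.Icc_subset_Icc (by omega) (by omega)
  have e₁ : ∑ k ∈ Sint m (3 * N), (if k ∈ Sint m N then (1 : ℝ) else 0) = (2 * N + 1 : ℕ) := by
    rw [← Finset.sum_filter, Finset.filter_mem_eq_inter, Finset.inter_eq_right.2 hsub,
      Finset.sum_const, card_Sint, nsmul_one]
  have e₂ : ∑ k ∈ Sint m (3 * N), (if k ∈ Sint m N then (1 : ℝ) else 0) ^ p * w k =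
      wSum w (Sint m N) := by
    rw [wSum, ← Finset.inter_eq_right.2 hsub, ← Finset.filter_mem_eq_inter, Finset.sum_filter]
    refine Finset.sum_congr rfl fun k hk => ?_
    by_cases hkN : k ∈ Sint m N <;> simp [hkN, hk, Real.zero_rpow hp0.ne']
  rw [e₁, e₂, card_Sint] at h
  have h3 : (3 : ℝ)⁻¹ ≤ ((2 * (3 * N) + 1 : ℕ) : ℝ)⁻¹ * (2 * N + 1 : ℕ) := by
    rw [inv_mul_eq_div, le_div_iff₀ (by positivity)]
    push_cast
    linarith
  have h4 : (3 ^ p : ℝ)⁻¹ * wSum w (Sint m (3 * N)) ≤ C * wSum w (Sint m N) := by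
    refine le_trans (mul_le_mul_of_nonneg_right ?_ hW.le) h
    rw [← Real.inv_rpow (by norm_num)]
    exact Real.rpow_le_rpow (by norm_num) h3 hp0.le
  rwa [inv_mul_le_iff₀ (by positivity), ← mul_assoc] at h4

end Averages

/-- if `w ∈ A_p(ℤ)` with `1 < p < q`, then the discrete Hardy–Littlewood
maximal operator is bounded on the discrete weighted Morrey space `l^p_q(w)`. -/
theorem stmt16 (p q : ℝ) (hp : 1 < p) (hpq : p < q) (w : ℤ → ℝ)
    (hw : ∀ k, 0 < w k) (hAp : discreteAp p w) :
    ∃ C > 0, ∀ x : ℤ → ℝ,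
      BddAbove (Set.range fun mN : ℤ × ℕ =>
        (wSum w (Sint mN.1 mN.2)) ^ (1/q - 1/p) *
          (∑ k ∈ Sint mN.1 mN.2, |x k| ^ p * w k) ^ (1/p)) →
      morreyNorm p q w w (maxHL x) ≤ C * morreyNorm p q w w x := by
  obtain ⟨C₀, hC₀⟩ := hAp
  set C : ℝ := max C₀ 1
  have hC1 : 1 ≤ C := le_max_right _ _
  have hC0 : 0 < C := by linarith
  have hC : ∀ a b : ℤ, a ≤ b →
      (((Icc a b).card : ℝ)⁻¹ * ∑ k ∈ Icc a b, w k) *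
        (((Icc a b).card : ℝ)⁻¹ * ∑ k ∈ Icc a b, (w k) ^ (-(p-1)⁻¹)) ^ (p-1) ≤ C :=
    fun a b hab => (hC₀ a b hab).trans (le_max_left _ _)
  clear_value C
  have hp0 : 0 < p := by linarith
  have hq0 : 0 < q := by linarith
  have hpq0 : 0 ≤ 1 - p / q := sub_nonneg.2 ((div_le_one hq0).2 hpq.le)
  have hpq1 : 1 - p / q ≤ 1 := sub_le_self _ (by positivity)
  obtain ⟨K, hK, hmaj⟩ := exists_average_majorant hp hw hC0 hC
  have hD1 : 1 ≤ 3 ^ p * C :=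
    one_le_mul_of_one_le_of_one_le (Real.one_le_rpow (by norm_num) hp0.le) hC1
  refine ⟨(2 ^ (p - 1) * (K * (3 ^ p * C) + 2 ^ p * C)) ^ (1 / p), by positivity, fun x hx => ?_⟩
  have hn0 := morreyNorm_nonneg p q hw x
  refine ciSup_le fun ⟨m, N⟩ => ?_
  have hW := wSum_Sint_pos hw m N
  have hmor := sum_rpow_mul_le_morreyNorm hp hpq hw hx
  have havg := average_Sint_le hp hpq hw hC0 hC hx
  have hdbl := wSum_Sint_triple_le hp hw hC m N
  simp only [abs_of_nonneg (maxHL_nonneg x _)]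
  set ν := morreyNorm p q w w x
  set W := wSum w (Sint m N)
  obtain ⟨G, hG0, hG, hGs⟩ := hmaj (fun k => |x k|) (fun k => abs_nonneg _)
    (m - (3 * N : ℕ)) (m + (3 * N : ℕ))
  change ∑ k ∈ Sint m (3 * N), G k ^ p * w k ≤ K * ∑ k ∈ Sint m (3 * N), |x k| ^ p * w k at hGs
  set H : ℝ := 2 * (C ^ (1 / p) * ν * W ^ (-(1 / q))) with hH
  have hH0 : 0 ≤ H := by positivity
  have hpoint : ∀ k ∈ Sint m N, maxHL x k ≤ G k + H := by
    intro k hk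
    rw [Sint, Finset.mem_Icc] at hk
    refine ciSup_le fun L => ?_
    rcases le_or_gt L (2 * N) with hL | hL
    · have h := hG (k - L) k (k + L) (by push_cast; omega) (by omega) (by omega)
        (by push_cast; omega)
      change ((Sint k L).card : ℝ)⁻¹ * ∑ j ∈ Sint k L, |x j| ≤ G k at h
      rw [card_Sint] at h
      linarith
    · have hsub : Sint k L ⊆ Sint m (2 * L) :=
        Finset.Icc_subset_Icc (by push_cast; omega) (by push_cast; omega)
      have hsub' : Sint m N ⊆ Sint m (2 * L) :=
        Finset.Icc_subset_Icc (by push_cast; omega) (by push_cast; omega)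
      have hsum : ∑ j ∈ Sint k L, |x j| ≤ ∑ j ∈ Sint m (2 * L), |x j| :=
        Finset.sum_le_sum_of_subset_of_nonneg hsub fun j _ _ => abs_nonneg _
      have hinv : ((2 * L + 1 : ℕ) : ℝ)⁻¹ ≤ 2 * ((2 * (2 * L) + 1 : ℕ) : ℝ)⁻¹ := by
        rw [← div_eq_mul_inv, inv_eq_one_div, div_le_div_iff₀ (by positivity) (by positivity)]
        push_cast
        linarith
      have hWL : wSum w (Sint m (2 * L)) ^ (-(1 / q)) ≤ W ^ (-(1 / q)) :=
        Real.rpow_le_rpow_of_nonpos hW (wSum_mono hw hsub') (by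
          rw [neg_nonpos]; positivity)
      calc ((2 * L + 1 : ℕ) : ℝ)⁻¹ * ∑ j ∈ Sint k L, |x j|
          ≤ 2 * ((2 * (2 * L) + 1 : ℕ) : ℝ)⁻¹ * ∑ j ∈ Sint m (2 * L), |x j| :=
            mul_le_mul hinv hsum (Finset.sum_nonneg fun _ _ => abs_nonneg _) (by positivity)
        _ = 2 * (((2 * (2 * L) + 1 : ℕ) : ℝ)⁻¹ * ∑ j ∈ Sint m (2 * L), |x j|) := by ring
        _ ≤ 2 * (C ^ (1 / p) * ν * wSum w (Sint m (2 * L)) ^ (-(1 / q))) := by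
            exact mul_le_mul_of_nonneg_left (havg m (2 * L)) (by norm_num)
        _ ≤ H := by rw [hH]; gcongr
        _ ≤ G k + H := le_add_of_nonneg_left (hG0 k)
  have hlocal : ∑ k ∈ Sint m N, G k ^ p * w k ≤ K * (3 ^ p * C) * (ν ^ p * W ^ (1 - p / q)) := by
    have hsub : Sint m N ⊆ Sint m (3 * N) := Finset.Icc_subset_Icc (by omega) (by omega)
    have hDW : wSum w (Sint m (3 * N)) ^ (1 - p / q) ≤ 3 ^ p * C * W ^ (1 - p / q) := by
      refine (Real.rpow_le_rpow (wSum_Sint_pos hw _ _).le hdbl hpq0).trans ?_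
      rw [Real.mul_rpow (by positivity) hW.le]
      gcongr
      exact (Real.rpow_le_rpow_of_exponent_le hD1 hpq1).trans_eq (Real.rpow_one _)
    calc ∑ k ∈ Sint m N, G k ^ p * w k ≤ ∑ k ∈ Sint m (3 * N), G k ^ p * w k :=
          Finset.sum_le_sum_of_subset_of_nonneg hsub fun k _ _ =>
            mul_nonneg (Real.rpow_nonneg (hG0 k) _) (hw k).le
      _ ≤ K * (ν ^ p * wSum w (Sint m (3 * N)) ^ (1 - p / q)) :=
          hGs.trans (mul_le_mul_of_nonneg_left (hmor m (3 * N)) hK.le)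
      _ ≤ K * (ν ^ p * (3 ^ p * C * W ^ (1 - p / q))) := by gcongr
      _ = _ := by ring
  have hHp : H ^ p * W = 2 ^ p * C * (ν ^ p * W ^ (1 - p / q)) := by
    rw [hH, Real.mul_rpow (by norm_num) (by positivity), Real.mul_rpow (by positivity)
      (by positivity), Real.mul_rpow (by positivity) hn0, ← Real.rpow_mul hC0.le,
      ← Real.rpow_mul hW.le, one_div_mul_cancel hp0.ne', Real.rpow_one,
      show -(1 / q) * p = -(p / q) by ring, sub_eq_add_neg, Real.rpow_add hW, Real.rpow_one]
    ring
  have htotal : ∑ k ∈ Sint m N, maxHL x k ^ p * w k ≤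
      2 ^ (p - 1) * (K * (3 ^ p * C) + 2 ^ p * C) * (ν ^ p * W ^ (1 - p / q)) := by
    calc ∑ k ∈ Sint m N, maxHL x k ^ p * w k
        ≤ ∑ k ∈ Sint m N, 2 ^ (p - 1) * (G k ^ p * w k + H ^ p * w k) := by
          refine Finset.sum_le_sum fun k hk => ?_
          have h := (Real.rpow_le_rpow (maxHL_nonneg x k) (hpoint k hk) hp0.le).trans
            (add_rpow_le_two_rpow_mul (hG0 k) hH0 hp.le)
          have h2 := mul_le_mul_of_nonneg_right h (hw k).le
          linarith
      _ = 2 ^ (p - 1) * (∑ k ∈ Sint m N, G k ^ p * w k + H ^ p * W) := by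
          rw [← Finset.mul_sum, Finset.sum_add_distrib, ← Finset.mul_sum]
          rfl
      _ ≤ 2 ^ (p - 1) * (K * (3 ^ p * C) * (ν ^ p * W ^ (1 - p / q)) +
            2 ^ p * C * (ν ^ p * W ^ (1 - p / q))) := by
          rw [hHp]
          gcongr
      _ = _ := by ring
  have hroot := Real.rpow_le_rpow (Finset.sum_nonneg fun k _ =>
    mul_nonneg (Real.rpow_nonneg (maxHL_nonneg x k) _) (hw k).le) htotal
    (one_div_nonneg.2 hp0.le)
  rw [Real.mul_rpow (y := ν ^ p * W ^ (1 - p / q)) (by positivity) (by positivity),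
    Real.mul_rpow (x := ν ^ p) (by positivity) (by positivity), ← Real.rpow_mul hn0,
    ← Real.rpow_mul hW.le, mul_one_div_cancel hp0.ne',
    Real.rpow_one] at hroot
  have e : W ^ (1 / q - 1 / p) * W ^ ((1 - p / q) * (1 / p)) = 1 := by
    rw [← Real.rpow_add hW, show 1 / q - 1 / p + (1 - p / q) * (1 / p) = 0 by field_simp; ring,
      Real.rpow_zero]
  refine (mul_le_mul_of_nonneg_left hroot (Real.rpow_nonneg hW.le _)).trans_eq ?_
  rw [mul_left_comm, mul_left_comm (W ^ (1 / q - 1 / p)), e, mul_one]
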